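/- A quasicategory E is a Kan complex if and only if its homotopy category is a groupoid, i.e. every morphism in the homotopy category of E is an isomorphism. -/

import Mathlib

open CategoryTheory

open SSet Simplicial Opposite Limits

/-!
The outer horns of a quasicategory `E` whose edges are all invertible are filled by Joyal's
argument. Let `p : X ⟶ Y` restrict maps to `E` from joins with `Δ[m]` to joins with `∂Δ[m]`. Filling
a horn `Λ[m + 2, 0] ⟶ E` is the same as lifting its edge `01`, seen as an edge of `Y`, to an edge
of `X` with a given source, while fillers of inner horns only lift edges with a given target. Since
the edge is invertible, it is the edge `03` of a tetrahedron in `Y` whose edges `02` and `13` are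
degenerate. Lift `02` to a degenerate edge, then `12` with the target so obtained, then `01` by
means of the triangle `012`, then `13` to a degenerate edge, and finally `03` by composition.

For the homotopy category, the unit of an adjunction `ho ⊣ nerveFunctor` sends the edges of `E` to
morphisms which generate `ho.obj E`, since they factor through no proper wide subcategory, and
homotopy inverse edges to inverse morphisms. Conversely, maps from `E` to nerves factor through the
unit, and in the category whose morphisms are the homotopy classes of edges of `E` only invertible
edges become isomorphisms. That category may live in larger universes than the values of `ho`, but
the existence of the adjunction forces types in the larger universe to be small.
-/

universe w v u v' u'

section Subcomplexes

lemma exists_extension_of_innerAnodyneExtensions {A B E : SSet.{w}} [Quasicategory E] {i : A ⟶ B}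
    (hi : innerAnodyneExtensions i) (f : A ⟶ E) : ∃ g : B ⟶ E, i ≫ g = f := by
  have := hi _ (mem_innerFibrations (terminal.from E))
  have sq : CommSq f i (terminal.from E) (terminal.from B) := ⟨Subsingleton.elim _ _⟩
  exact ⟨sq.lift, sq.fac_left⟩

lemma exists_hom_sup {X E : SSet.{w}} {A B : X.Subcomplex} (f : A.toSSet ⟶ E) (g : B.toSSet ⟶ E)
    (h : Subcomplex.homOfLE (inf_le_left : A ⊓ B ≤ A) ≫ f =
      Subcomplex.homOfLE (inf_le_right : A ⊓ B ≤ B) ≫ g) :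
    ∃ k : (A ⊔ B).toSSet ⟶ E, Subcomplex.homOfLE le_sup_left ≫ k = f ∧
      Subcomplex.homOfLE le_sup_right ≫ k = g :=
  have sq : Subcomplex.BicartSq (A ⊓ B) A B (A ⊔ B) := ⟨rfl, rfl⟩
  sq.isPushout.exists_desc f g h

lemma exists_hom_sup_sup {X E : SSet.{w}} {A B C : X.Subcomplex} {f : A.toSSet ⟶ E}
    {g : B.toSSet ⟶ E} {h : C.toSSet ⟶ E}
    (hfg : Subcomplex.homOfLE (inf_le_left : A ⊓ B ≤ A) ≫ f =
      Subcomplex.homOfLE (inf_le_right : A ⊓ B ≤ B) ≫ g)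
    (hfh : Subcomplex.homOfLE (inf_le_left : A ⊓ C ≤ A) ≫ f =
      Subcomplex.homOfLE (inf_le_right : A ⊓ C ≤ C) ≫ h)
    (hgh : Subcomplex.homOfLE (inf_le_left : B ⊓ C ≤ B) ≫ g =
      Subcomplex.homOfLE (inf_le_right : B ⊓ C ≤ C) ≫ h) :
    ∃ k : (A ⊔ B ⊔ C).toSSet ⟶ E, Subcomplex.homOfLE (le_sup_left.trans le_sup_left) ≫ k = f ∧
      Subcomplex.homOfLE (le_sup_right.trans le_sup_left) ≫ k = g ∧
      Subcomplex.homOfLE le_sup_right ≫ k = h := by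
  obtain ⟨l, hf, hg⟩ := exists_hom_sup f g hfg
  obtain ⟨k, hkl, hkh⟩ := exists_hom_sup l h <| by
    ext d ⟨x, hx | hx, hxC⟩
    · exact (congrArg (fun p ↦ p.app d ⟨x, hx⟩) hf).trans
        (congrArg (fun p ↦ p.app d ⟨x, hx, hxC⟩) hfh)
    · exact (congrArg (fun p ↦ p.app d ⟨x, hx⟩) hg).trans
        (congrArg (fun p ↦ p.app d ⟨x, hx, hxC⟩) hgh)
  exact ⟨k, by rw [← hf, ← hkl]; rfl, by rw [← hg, ← hkl]; rfl, hkh⟩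

lemma hom_ext_of_le_sup {X E : SSet.{w}} {A B C : X.Subcomplex} (hC : C ≤ A ⊔ B)
    {f g : C.toSSet ⟶ E}
    (hA : Subcomplex.homOfLE (inf_le_left : C ⊓ A ≤ C) ≫ f = Subcomplex.homOfLE inf_le_left ≫ g)
    (hB : Subcomplex.homOfLE (inf_le_left : C ⊓ B ≤ C) ≫ f = Subcomplex.homOfLE inf_le_left ≫ g) :
    f = g := by
  ext d ⟨x, hx⟩
  obtain hxA | hxB := hC _ hx
  · exact congrArg (fun k ↦ k.app d ⟨x, hx, hxA⟩) hA
  · exact congrArg (fun k ↦ k.app d ⟨x, hx, hxB⟩) hB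

lemma isPushout_preimage_sup_range {X Y : SSet.{w}} (p : Y ⟶ X) [Mono p] (A : X.Subcomplex) :
    IsPushout (A.fromPreimage p) (A.preimage p).ι (Subcomplex.homOfLE le_sup_left)
      (Subcomplex.toRange p ≫ Subcomplex.homOfLE (le_sup_right : _ ≤ A ⊔ Subcomplex.range p)) where
  w := rfl
  isColimit' := ⟨evaluationJointlyReflectsColimits _ fun d ↦
    (isColimitMapCoconePushoutCoconeEquiv _ _).symm (IsPushout.isColimit <| by
      have hp : Function.Injective (p.app d) := (mono_iff_injective _).1 inferInstance
      refine Types.isPushout_of_isPullback_of_mono' ?_ ?_ ?_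
      · refine (Types.isPullback_iff _ _ _ _).2 ⟨rfl, fun _ _ h ↦ Subtype.ext h.2, ?_⟩
        rintro ⟨_, ha⟩ y h
        obtain rfl := congrArg Subtype.val h
        exact ⟨⟨y, ha⟩, rfl, rfl⟩
      · refine Set.eq_univ_iff_forall.2 ?_
        rintro ⟨x, hx | ⟨y, rfl⟩⟩
        · exact Or.inl ⟨⟨x, hx⟩, rfl⟩
        · exact Or.inr ⟨y, rfl⟩
      · exact fun x y _ _ h ↦ hp (congrArg Subtype.val h))⟩

lemma innerAnodyneExtensions_sup_range {X : SSet.{w}} {n : ℕ} {a : Fin (n + 1)}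
    (h₀ : 0 < a) (hₙ : a < Fin.last n) {p : Δ[n] ⟶ X} [Mono p] {A : X.Subcomplex}
    (hA : A.preimage p = Λ[n, a]) :
    innerAnodyneExtensions (Subcomplex.homOfLE (le_sup_left : A ≤ A ⊔ Subcomplex.range p)) := by
  refine MorphismProperty.of_isPushout (isPushout_preimage_sup_range p A) ?_
  rw [hA]
  exact innerAnodyneExtensions.horn_ι h₀ hₙ

/-- The restriction of `f` to subcomplexes of its source and of its target. -/
def restrictMap {X Y : SSet.{w}} {A : X.Subcomplex} {B : Y.Subcomplex} (f : X ⟶ Y)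
    (h : A ≤ B.preimage f) : A.toSSet ⟶ B.toSSet :=
  Subcomplex.homOfLE h ≫ B.fromPreimage f

lemma restrictMap_ι {X Y : SSet.{w}} {A : X.Subcomplex} {B : Y.Subcomplex} (f : X ⟶ Y)
    (h : A ≤ B.preimage f) : restrictMap f h ≫ B.ι = A.ι ≫ f :=
  rfl

lemma restrictMap_ι_assoc {X Y Z : SSet.{w}} {A : X.Subcomplex} {B : Y.Subcomplex} (f : X ⟶ Y)
    (h : A ≤ B.preimage f) (g : Y ⟶ Z) : restrictMap f h ≫ B.ι ≫ g = A.ι ≫ f ≫ g :=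
  rfl

end Subcomplexes

section Faces

open SSet.stdSimplex (face face_le_face_iff mem_face_iff monotone_apply objMk face_eq_ofSimplex)

variable {n N : ℕ}

lemma image_face (f : ⦋n⦌ ⟶ ⦋N⦌) (S : Finset (Fin (n + 1))) :
    (face.{w} S).image (SSet.stdSimplex.map f) = face (S.image f.toOrderHom) := by
  refine le_antisymm ?_ ?_
  · rw [Subcomplex.image_le_iff]
    rintro ⟨⟨d⟩⟩ x hx
    rw [mem_face_iff] at hx
    exact (mem_face_iff _ _).2 fun i ↦ Finset.mem_image_of_mem _ (hx i)
  · rintro ⟨⟨d⟩⟩ y hy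
    rw [mem_face_iff] at hy
    choose s hs hsf using fun t (ht : t ∈ S.image f.toOrderHom) ↦ Finset.mem_image.1 ht
    have hmono : Monotone fun i ↦ s (y i) (hy i) := by
      intro i j hij
      obtain h | h := (monotone_apply y hij).eq_or_lt
      · simp only [h, le_refl]
      · refine (f.toOrderHom.monotone.reflect_lt ?_).le
        rwa [hsf, hsf]
    exact ⟨objMk ⟨_, hmono⟩, (mem_face_iff _ _).2 fun i ↦ hs _ _, by ext i : 1; exact hsf _ (hy i)⟩

lemma face_le_preimage_map_iff (f : ⦋n⦌ ⟶ ⦋N⦌) (S : Finset (Fin (n + 1))) (A : Δ[N].Subcomplex) :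
    face.{w} S ≤ A.preimage (SSet.stdSimplex.map f) ↔ face (S.image f.toOrderHom) ≤ A := by
  rw [← image_face, Subcomplex.image_le_iff]

lemma face_le_sup_iff {S : Finset (Fin (n + 1))} {A B : Δ[n].Subcomplex} :
    face.{w} S ≤ A ⊔ B ↔ face S ≤ A ∨ face S ≤ B := by
  obtain rfl | hS := S.eq_empty_or_nonempty
  · simp
  obtain ⟨k, hk⟩ := Nat.exists_eq_succ_of_ne_zero (Finset.card_pos.2 hS).ne'
  rw [face_eq_ofSimplex S k (S.orderIsoOfFin hk)]
  simp only [Subcomplex.ofSimplex_le_iff]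
  rfl

lemma le_iff_forall_face_le {A B : Δ[n].Subcomplex} :
    A ≤ B ↔ ∀ S, face.{w} S ≤ A → face S ≤ B := by
  refine ⟨fun h S hS ↦ hS.trans h, fun h ↦ ?_⟩
  rw [Subcomplex.le_iff_contains_nonDegenerate]
  intro d x hx
  obtain ⟨S, rfl⟩ := SSet.stdSimplex.nonDegenerateEquiv'.symm.surjective x
  rw [SSet.stdSimplex.nonDegenerateEquiv'_symm_mem_iff_face_le] at hx ⊢
  exact h _ hx

lemma mono_stdSimplex_map {f : ⦋n⦌ ⟶ ⦋N⦌} (hf : Function.Injective f.toOrderHom) :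
    Mono (SSet.stdSimplex.{w}.map f) := by
  refine (NatTrans.mono_iff_mono_app _).2 fun ⟨⟨d⟩⟩ ↦ (mono_iff_injective _).2 fun x y h ↦ ?_
  exact SSet.stdSimplex.ext _ _ fun i ↦ hf (congrArg (fun z : Δ[N] _⦋d⦌ ↦ z i) h)

lemma preimage_map_eq_horn_iff {f : ⦋n + 1⦌ ⟶ ⦋N⦌} {a : Fin (n + 2)} {A : Δ[N].Subcomplex} :
    A.preimage (SSet.stdSimplex.{w}.map f) = Λ[n + 1, a] ↔
      ∀ i : Fin (n + 2), face (({i}ᶜ : Finset (Fin (n + 2))).image f.toOrderHom) ≤ A ↔ i ≠ a := by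
  have hf (S : Finset (Fin (n + 2))) := face_le_preimage_map_iff f S A
  refine ⟨fun h i ↦ ?_, fun h ↦ le_antisymm ?_ ?_⟩
  · rw [← hf, h, face_le_horn_iff]
    simp
  · rw [subcomplex_le_horn_iff, hf, h]
    simp
  · rw [horn_eq_iSup]
    exact iSup_le fun ⟨i, hi⟩ ↦ (hf _).2 ((h i).2 hi)

lemma innerAnodyneExtensions_sup_face {A : (Δ[N] : SSet.{w}).Subcomplex}
    {S : Finset (Fin (N + 1))} {v : Fin (N + 1)} (hlt : ∃ i ∈ S, i < v) (hgt : ∃ i ∈ S, v < i)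
    (hv : v ∉ S) (hA : ∀ i ∈ insert v S, face ((insert v S).erase i) ≤ A ↔ i ≠ v) :
    innerAnodyneExtensions (Subcomplex.homOfLE (le_sup_left : A ≤ A ⊔ face (insert v S))) := by
  obtain ⟨i, hi, hiv⟩ := hlt
  obtain ⟨j, hj, hvj⟩ := hgt
  obtain ⟨n, hn⟩ := Nat.exists_eq_succ_of_ne_zero (Finset.card_pos.2 ⟨i, hi⟩).ne'
  have hcard : (insert v S).card = n + 2 := by rw [Finset.card_insert_of_notMem hv, hn]
  let e : Fin (n + 2) ↪o Fin (N + 1) := (insert v S).orderEmbOfFin hcard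
  have he : Finset.univ.image e = insert v S := Finset.image_orderEmbOfFin_univ _ hcard
  have hmem {k} : k ∈ insert v S ↔ ∃ l, e l = k := by simp [← he]
  let f : ⦋n + 1⦌ ⟶ ⦋N⦌ := SimplexCategory.Hom.mk e.toOrderHom
  have := mono_stdSimplex_map (f := f) e.injective
  obtain ⟨a, ha⟩ := hmem.1 (Finset.mem_insert_self v S)
  obtain ⟨i, rfl⟩ := hmem.1 (Finset.mem_insert_of_mem hi)
  obtain ⟨j, rfl⟩ := hmem.1 (Finset.mem_insert_of_mem hj)
  rw [← ha, e.lt_iff_lt] at hiv hvj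
  have hrange : Subcomplex.range (SSet.stdSimplex.map f) = face (insert v S) := by
    rw [← Subcomplex.image_top, ← SSet.stdSimplex.face_univ, image_face, ← he]
    rfl
  rw [← hrange]
  refine innerAnodyneExtensions_sup_range ((Fin.zero_le _).trans_lt hiv)
    (hvj.trans_le (Fin.le_last _)) (preimage_map_eq_horn_iff.2 fun k ↦ ?_)
  have hk : ({k}ᶜ : Finset _).image f.toOrderHom = (insert v S).erase (e k) := by
    rw [Finset.compl_singleton, ← he]
    exact Finset.image_erase e.injective _ _
  rw [hk, hA _ (hmem.2 ⟨k, rfl⟩), ← ha, e.injective.ne_iff]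

lemma innerAnodyneExtensions_homOfLE {A B : (Δ[N] : SSet.{w}).Subcomplex} (hAB : A ≤ B)
    (v : Fin (N + 1)) (h : ∀ S, face S ≤ B → ¬ face S ≤ A → face (insert v S) ≤ B ∧
      ¬ face (S.erase v) ≤ A ∧ (∃ i ∈ S, i < v) ∧ ∃ i ∈ S, v < i) :
    innerAnodyneExtensions (Subcomplex.homOfLE hAB) := by
  induction hM : {S | ¬ face S ≤ A} using WellFoundedLT.induction generalizing A with
  | ind M ih =>
    subst hM
    by_cases hBA : B ≤ A
    · obtain rfl := hAB.antisymm hBA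
      exact innerAnodyneExtensions.id_mem _
    rw [le_iff_forall_face_le] at hBA
    push Not at hBA
    obtain ⟨S, ⟨hSB, hSA⟩, hmin⟩ := exists_minimal_of_wellFoundedLT _ hBA
    replace hmin {T} (hT : T ⊂ S) : face T ≤ A := by_contra fun hTA ↦
      hT.2 (hmin ⟨((face_le_face_iff _ _).2 hT.1).trans hSB, hTA⟩ hT.1)
    obtain ⟨hB, hA, hlt, hgt⟩ := h S hSB hSA
    have hv : v ∉ S := fun hv ↦ hA (hmin (Finset.erase_ssubset hv))
    have hstep := innerAnodyneExtensions_sup_face (A := A) hlt hgt hv fun i hi ↦ by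
      obtain rfl | hiv := eq_or_ne i v
      · simpa [Finset.erase_insert hv] using hSA
      · have hiS := Finset.mem_of_mem_insert_of_ne hi hiv
        refine iff_of_true (by_contra fun hT ↦ ?_) hiv
        refine (h _ (((face_le_face_iff _ _).2 (Finset.erase_subset _ _)).trans hB) hT).2.1
          (hmin ?_)
        rw [Finset.erase_right_comm, Finset.erase_insert hv]
        exact Finset.erase_ssubset hiS
    refine MorphismProperty.comp_mem _ _ _ hstep (ih _ ?_ (sup_le hAB hB) ?_ rfl)
    · refine ⟨fun T hT hTA ↦ hT (hTA.trans le_sup_left), fun hle ↦ hle hSA ?_⟩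
      exact ((face_le_face_iff _ _).2 (Finset.subset_insert v S)).trans le_sup_right
    · intro T hTB hTA
      obtain ⟨hTB', hTA', hlt, hgt⟩ := h T hTB fun hT ↦ hTA (hT.trans le_sup_left)
      refine ⟨hTB', fun hT ↦ ?_, hlt, hgt⟩
      obtain hT | hT := face_le_sup_iff.1 hT
      · exact hTA' hT
      · rw [face_le_face_iff, ← Finset.subset_insert_iff, Finset.insert_idem] at hT
        exact hTA (((face_le_face_iff _ _).2 hT).trans le_sup_right)

/-- The union of the facets of `Δ[n]` opposite to the vertices `i ≥ k`, which is the join of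
`Δ[k - 1]` and `∂Δ[n - k]`. For `k = 1` this is the horn `Λ[n, 0]`. -/
def facetsGE (n k : ℕ) : (Δ[n] : SSet.{w}).Subcomplex :=
  ⨆ i : {i : Fin (n + 1) // k ≤ i}, face {i.1}ᶜ

lemma face_le_facetsGE_iff {k : ℕ} (hk : k ≤ n) {S : Finset (Fin (n + 1))} :
    face S ≤ facetsGE.{w} n k ↔ ∃ i : Fin (n + 1), k ≤ i ∧ i ∉ S := by
  obtain rfl | hS := S.eq_empty_or_nonempty
  · simpa using ⟨⟨k, by lia⟩, le_rfl⟩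
  obtain ⟨l, hl⟩ := Nat.exists_eq_succ_of_ne_zero (Finset.card_pos.2 hS).ne'
  have h : face S ≤ facetsGE.{w} n k ↔
      ∃ i : {i : Fin (n + 1) // k ≤ i}, face.{w} S ≤ face {i.1}ᶜ := by
    rw [face_eq_ofSimplex S l (S.orderIsoOfFin hl)]
    simp only [facetsGE, Subcomplex.ofSimplex_le_iff, Subfunctor.iSup_obj, Set.mem_iUnion]
  simp [h, face_le_face_iff, Finset.subset_compl_comm (s := S)]

lemma face_le_face_inf_facetsGE_iff {k : ℕ} (hk : k ≤ n) {p : Fin (n + 1) → Prop}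
    [DecidablePred p] {S : Finset (Fin (n + 1))} :
    face.{w} S ≤ face {i | p i} ⊓ facetsGE n k ↔
      (∀ i ∈ S, p i) ∧ ∃ i : Fin (n + 1), k ≤ i ∧ i ∉ S := by
  simp [le_inf_iff, face_le_face_iff, face_le_facetsGE_iff hk, Finset.subset_iff]

lemma horn_zero_eq_facetsGE : Λ[n, 0] = facetsGE.{w} n 1 := by
  rw [horn_eq_iSup, facetsGE]
  exact (Equiv.subtypeEquivRight fun i ↦ by simp [Nat.one_le_iff_ne_zero]).iSup_congr fun _ ↦ rfl

/-- The map `Δ[a] ⟶ Δ[b]` given on vertices by `u : ℕ → ℕ`. -/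
def mapOfNat {a b : ℕ} (u : ℕ → ℕ) (hu : ∀ i j, i ≤ j → u i ≤ u j := by clear * -; grind)
    (h : ∀ i ≤ a, u i ≤ b := by clear * -; grind) : (Δ[a] : SSet.{w}) ⟶ Δ[b] :=
  SSet.stdSimplex.map (SimplexCategory.mkHom
    ⟨fun i ↦ ⟨u i, Nat.lt_succ_of_le (h i (Nat.le_of_lt_succ i.2))⟩, fun _ _ hij ↦ hu _ _ hij⟩)

lemma mapOfNat_comp_mapOfNat {a b c : ℕ} {u v : ℕ → ℕ} {hu : ∀ i j, i ≤ j → u i ≤ u j}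
    {hv : ∀ i j, i ≤ j → v i ≤ v j} {hub : ∀ i ≤ a, u i ≤ b} {hvc : ∀ i ≤ b, v i ≤ c} :
    mapOfNat.{w} u hu hub ≫ mapOfNat v hv hvc =
      mapOfNat (fun i ↦ v (u i)) (fun i j hij ↦ hv _ _ (hu i j hij)) fun i hi ↦ hvc _ (hub i hi) :=
  rfl

lemma mapOfNat_id {a : ℕ} : mapOfNat.{w} (fun i ↦ i) = 𝟙 (Δ[a] : SSet.{w}) :=
  SSet.stdSimplex.map_id _

lemma stdSimplex_δ_zero : SSet.stdSimplex.{w}.δ (0 : Fin (n + 2)) = mapOfNat (· + 1) := rfl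

lemma stdSimplex_δ_one :
    SSet.stdSimplex.{w}.δ (1 : Fin (n + 2)) = mapOfNat fun i ↦ if i = 0 then 0 else i + 1 := by
  refine congrArg SSet.stdSimplex.map ?_
  ext i : 3
  obtain rfl | ⟨i, rfl⟩ := i.eq_zero_or_eq_succ
  · rfl
  · exact Fin.one_succAbove_succ i

lemma stdSimplex_σ_zero : SSet.stdSimplex.{w}.σ (0 : Fin (n + 1)) = mapOfNat (· - 1) := by
  refine congrArg SSet.stdSimplex.map ?_
  ext i : 3
  obtain rfl | ⟨i, rfl⟩ := i.eq_zero_or_eq_succ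
  · rfl
  · exact Fin.predAbove_zero_succ

section

variable {A : (Δ[N] : SSet.{w}).Subcomplex} {B : (Δ[n] : SSet.{w}).Subcomplex} {u v : ℕ → ℕ}
  {hu : ∀ i j, i ≤ j → u i ≤ u j} {hv : ∀ i j, i ≤ j → v i ≤ v j} {hun : ∀ i ≤ N, u i ≤ n}
  {hvn : ∀ i ≤ N, v i ≤ n}

lemma le_preimage_mapOfNat
    (hAB : ∀ S, face S ≤ A → face (S.image fun i : Fin (N + 1) ↦
      (⟨u i, Nat.lt_succ_of_le (hun i (Nat.le_of_lt_succ i.2))⟩ : Fin (n + 1))) ≤ B) :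
    A ≤ B.preimage (mapOfNat u hu hun) :=
  le_iff_forall_face_le.2 fun S hS ↦ (face_le_preimage_map_iff _ _ _).2 (hAB S hS)

lemma range_mapOfNat_le
    (hB : face (Finset.univ.image fun i : Fin (N + 1) ↦
      (⟨u i, Nat.lt_succ_of_le (hun i (Nat.le_of_lt_succ i.2))⟩ : Fin (n + 1))) ≤ B) :
    Subcomplex.range (mapOfNat u hu hun) ≤ B := by
  rw [← Subcomplex.image_top, Subcomplex.image_le_iff, ← SSet.stdSimplex.face_univ]
  exact (face_le_preimage_map_iff _ _ _).2 hB

lemma ι_comp_mapOfNat_congr (h : ∀ S, face S ≤ A → ∀ i ∈ S, u i = v i) :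
    A.ι ≫ mapOfNat u hu hun = A.ι ≫ mapOfNat v hv hvn := by
  have hA : A ≤ face ({i | u i = v i} : Finset (Fin (N + 1))) :=
    le_iff_forall_face_le.2 fun S hS ↦ (face_le_face_iff _ _).2 fun i hi ↦ by
      simpa using h S hS i hi
  ext ⟨⟨d⟩⟩ ⟨x, hx⟩ : 4
  ext i : 1
  exact Fin.ext ((Finset.mem_filter_univ (x i)).1 ((mem_face_iff _ _).1 (hA _ hx) i))

end

end Faces

section OuterHorn

open SSet.stdSimplex (face face_le_face_iff)

variable (m : ℕ)

/-- Regarding `Δ[m + 4]` as the join of a tetrahedron `Δ[3]` with `Δ[m]`, the join of the edge `02`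
with the boundary of the face `Δ[m + 1]` on the vertices `≥ 3`. -/
def zeroTwoPart : (Δ[m + 4] : SSet.{w}).Subcomplex :=
  face {i | (i : ℕ) ≠ 1} ⊓ facetsGE (m + 4) 3

/-- In the join of `Δ[3]` and `Δ[m]`, the join of the edge `13` with the boundary of `Δ[m]`. -/
def oneThreePart : (Δ[m + 4] : SSet.{w}).Subcomplex :=
  face {i | (i : ℕ) ≠ 0 ∧ (i : ℕ) ≠ 2} ⊓ facetsGE (m + 4) 4

/-- The first factor of the join of `Δ[3]` and `Δ[m]`. -/
def tetrahedronPart : (Δ[m + 4] : SSet.{w}).Subcomplex := face {i | (i : ℕ) ≤ 3}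

variable {m}

lemma face_le_zeroTwoPart_iff {S : Finset (Fin (m + 5))} :
    face.{w} S ≤ zeroTwoPart m ↔
      (∀ i ∈ S, (i : ℕ) ≠ 1) ∧ ∃ i : Fin (m + 5), 3 ≤ (i : ℕ) ∧ i ∉ S :=
  face_le_face_inf_facetsGE_iff (by lia)

lemma face_le_oneThreePart_iff {S : Finset (Fin (m + 5))} :
    face.{w} S ≤ oneThreePart m ↔
      (∀ i ∈ S, (i : ℕ) ≠ 0 ∧ (i : ℕ) ≠ 2) ∧ ∃ i : Fin (m + 5), 4 ≤ (i : ℕ) ∧ i ∉ S :=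
  face_le_face_inf_facetsGE_iff (by lia)

lemma face_le_tetrahedronPart_iff {S : Finset (Fin (m + 5))} :
    face.{w} S ≤ tetrahedronPart m ↔ ∀ i ∈ S, (i : ℕ) ≤ 3 := by
  simp [tetrahedronPart, face_le_face_iff, Finset.subset_iff]

/-- The degeneracy collapsing the vertices `0`, `1`, `2` to `0`. On `zeroTwoPart` it is the collapse
of the edge `02` onto the apex of the horn `Λ[m + 2, 0]`. -/
def zeroTwoMap (m : ℕ) : (Δ[m + 4] : SSet.{w}) ⟶ Δ[m + 2] := mapOfNat (· - 2)

/-- The map sending the vertices `0`, ..., `3` to `1` and the further ones to the last ones. On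
`oneThreePart` it is the collapse of the edge `13` onto the vertex `1` of the horn `Λ[m + 2, 0]`. -/
def oneThreeMap (m : ℕ) : (Δ[m + 4] : SSet.{w}) ⟶ Δ[m + 2] := mapOfNat fun i ↦ max 1 (i - 2)

lemma zeroTwoPart_le_preimage_horn :
    zeroTwoPart.{w} m ≤ Λ[m + 2, 0].preimage (zeroTwoMap m) := by
  refine le_preimage_mapOfNat fun S hS ↦ ?_
  obtain ⟨-, i, hi, hiS⟩ := face_le_zeroTwoPart_iff.1 hS
  rw [horn_zero_eq_facetsGE, face_le_facetsGE_iff (by lia)]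
  exact ⟨⟨i - 2, by lia⟩, by grind, by grind⟩

lemma oneThreePart_le_preimage_horn :
    oneThreePart.{w} m ≤ Λ[m + 2, 0].preimage (oneThreeMap m) := by
  refine le_preimage_mapOfNat fun S hS ↦ ?_
  obtain ⟨-, i, hi, hiS⟩ := face_le_oneThreePart_iff.1 hS
  rw [horn_zero_eq_facetsGE, face_le_facetsGE_iff (by lia)]
  exact ⟨⟨i - 2, by lia⟩, by grind, by grind⟩

/-- The subcomplex of the join of `Δ[3]` and `Δ[m]` on which a map is prescribed by a horn
`Λ[m + 2, 0]` and a tetrahedron whose edges `02` and `13` are degenerate. -/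
def initialPart (m : ℕ) : (Δ[m + 4] : SSet.{w}).Subcomplex :=
  tetrahedronPart m ⊔ zeroTwoPart m ⊔ oneThreePart m

lemma face_le_initialPart_iff {S : Finset (Fin (m + 5))} :
    face.{w} S ≤ initialPart m ↔ face.{w} S ≤ tetrahedronPart m ∨
      face.{w} S ≤ zeroTwoPart m ∨ face.{w} S ≤ oneThreePart m := by
  rw [initialPart, face_le_sup_iff, face_le_sup_iff, or_assoc]

lemma initialPart_le_facetsGE : initialPart.{w} m ≤ facetsGE (m + 4) 3 := by
  rw [le_iff_forall_face_le]
  intro S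
  rw [face_le_initialPart_iff, face_le_tetrahedronPart_iff, face_le_zeroTwoPart_iff,
    face_le_oneThreePart_iff, face_le_facetsGE_iff (by lia)]
  rintro (h | ⟨_, h⟩ | ⟨_, i, hi, hiS⟩)
  · exact ⟨⟨4, by lia⟩, by grind, by grind⟩
  · exact h
  · exact ⟨i, by lia, hiS⟩

/-- The subcomplex obtained from `initialPart` by adding the join of the triangle `123` with the
boundary of `Δ[m]`. -/
def middlePart (m : ℕ) : (Δ[m + 4] : SSet.{w}).Subcomplex :=
  initialPart m ⊔ face {i | (i : ℕ) ≠ 0} ⊓ facetsGE (m + 4) 4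

lemma face_le_middlePart_iff {S : Finset (Fin (m + 5))} :
    face.{w} S ≤ middlePart m ↔ face.{w} S ≤ initialPart m ∨
      (∀ i ∈ S, (i : ℕ) ≠ 0) ∧ ∃ i : Fin (m + 5), 4 ≤ (i : ℕ) ∧ i ∉ S := by
  rw [middlePart, face_le_sup_iff, face_le_face_inf_facetsGE_iff (by lia)]

lemma initialPart_le_middlePart : initialPart.{w} m ≤ middlePart m := le_sup_left

lemma middlePart_le_facetsGE : middlePart.{w} m ≤ facetsGE (m + 4) 3 := by
  rw [le_iff_forall_face_le]
  intro S hS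
  obtain hS | ⟨-, i, hi, hiS⟩ := face_le_middlePart_iff.1 hS
  · exact hS.trans initialPart_le_facetsGE
  · exact (face_le_facetsGE_iff (by lia)).2 ⟨i, by lia, hiS⟩

lemma innerAnodyneExtensions_initialPart_le_middlePart :
    innerAnodyneExtensions
      (Subcomplex.homOfLE (initialPart_le_middlePart.{w} (m := m))) := by
  refine innerAnodyneExtensions_homOfLE _ ⟨3, by lia⟩ ?_
  simp only [face_le_middlePart_iff, face_le_initialPart_iff, face_le_tetrahedronPart_iff,
    face_le_zeroTwoPart_iff, face_le_oneThreePart_iff, Fin.lt_def]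
  grind

lemma innerAnodyneExtensions_middlePart_le_facetsGE :
    innerAnodyneExtensions (Subcomplex.homOfLE (middlePart_le_facetsGE.{w} (m := m))) := by
  refine innerAnodyneExtensions_homOfLE _ ⟨2, by lia⟩ ?_
  simp only [face_le_middlePart_iff, face_le_initialPart_iff, face_le_tetrahedronPart_iff,
    face_le_zeroTwoPart_iff, face_le_oneThreePart_iff,
    face_le_facetsGE_iff (Nat.le_add_left 3 (m + 1)), Fin.lt_def]
  grind

/-- The retraction of `Δ[m + 4]` onto `Δ[3]` which collapses the vertices `≥ 3`. -/
def tetrahedronMap (m : ℕ) : (Δ[m + 4] : SSet.{w}) ⟶ Δ[3] := mapOfNat (min · 3)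

/-- The edge `01` of the horn `Λ[m + 2, 0]`. -/
def initialEdge (m : ℕ) : Δ[1] ⟶ (Λ[m + 2, 0] : SSet.{w}) :=
  Subcomplex.lift (mapOfNat fun i ↦ i) <| by
    rw [horn_zero_eq_facetsGE]
    exact range_mapOfNat_le ((face_le_facetsGE_iff (by lia)).2 ⟨Fin.last _, by grind, by grind⟩)

lemma initialEdge_ι : initialEdge.{w} m ≫ Λ[m + 2, 0].ι = mapOfNat fun i ↦ i := rfl

/-- A 3-simplex `τ` whose face `023` is the degeneracy of the edge `e` collapsing `0` and `2` and
whose edge `13` is degenerate: it exhibits its edge `12` as an inverse of `e` up to homotopy. -/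
structure IsInverseTetrahedron {E : SSet.{w}} (e : Δ[1] ⟶ E) (τ : Δ[3] ⟶ E) : Prop where
  zeroTwoThree : SSet.stdSimplex.δ 1 ≫ τ = SSet.stdSimplex.σ 0 ≫ e
  oneThree : SSet.stdSimplex.δ 1 ≫ SSet.stdSimplex.δ 0 ≫ τ =
    SSet.stdSimplex.σ 0 ≫ SSet.stdSimplex.δ 0 ≫ e

section

variable {E : SSet.{w}} {φ : (Λ[m + 2, 0] : SSet.{w}) ⟶ E} {τ : Δ[3] ⟶ E}

lemma tetrahedronMap_comp_eq_zeroTwoMap_comp (hτ : IsInverseTetrahedron (initialEdge m ≫ φ) τ) :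
    Subcomplex.homOfLE inf_le_left ≫ (tetrahedronPart m).ι ≫ tetrahedronMap m ≫ τ =
      Subcomplex.homOfLE (inf_le_right : tetrahedronPart.{w} m ⊓ zeroTwoPart m ≤ _) ≫
        restrictMap (zeroTwoMap m) zeroTwoPart_le_preimage_horn ≫ φ := by
  let A := tetrahedronPart.{w} m ⊓ zeroTwoPart m
  let s : (Δ[m + 4] : SSet.{w}) ⟶ Δ[2] := mapOfNat fun i ↦ min (i - 1) 2
  have hτ' : A.ι ≫ tetrahedronMap m = A.ι ≫ s ≫ SSet.stdSimplex.δ 1 := by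
    simp only [s, tetrahedronMap, stdSimplex_δ_one, mapOfNat_comp_mapOfNat]
    refine ι_comp_mapOfNat_congr fun S hS ↦ ?_
    rw [le_inf_iff, face_le_tetrahedronPart_iff, face_le_zeroTwoPart_iff] at hS
    grind
  have hφ : A.ι ≫ s ≫ SSet.stdSimplex.σ 0 ≫ initialEdge m =
      Subcomplex.homOfLE inf_le_right ≫
        restrictMap (zeroTwoMap m) zeroTwoPart_le_preimage_horn := by
    refine (cancel_mono Λ[m + 2, 0].ι).1 ?_
    simp only [s, zeroTwoMap, Category.assoc, initialEdge_ι, restrictMap_ι, stdSimplex_σ_zero,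
      mapOfNat_comp_mapOfNat, Subcomplex.homOfLE_ι_assoc]
    refine ι_comp_mapOfNat_congr fun S hS ↦ ?_
    rw [le_inf_iff, face_le_tetrahedronPart_iff] at hS
    exact fun i hi ↦ by have := hS.1 i hi; lia
  calc A.ι ≫ tetrahedronMap m ≫ τ
    _ = A.ι ≫ s ≫ SSet.stdSimplex.δ 1 ≫ τ := congrArg (· ≫ τ) hτ'
    _ = A.ι ≫ s ≫ SSet.stdSimplex.σ 0 ≫ initialEdge m ≫ φ := by rw [hτ.zeroTwoThree]
    _ = _ := congrArg (· ≫ φ) hφ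

lemma tetrahedronMap_comp_eq_oneThreeMap_comp (hτ : IsInverseTetrahedron (initialEdge m ≫ φ) τ) :
    Subcomplex.homOfLE inf_le_left ≫ (tetrahedronPart m).ι ≫ tetrahedronMap m ≫ τ =
      Subcomplex.homOfLE (inf_le_right : tetrahedronPart.{w} m ⊓ oneThreePart m ≤ _) ≫
        restrictMap (oneThreeMap m) oneThreePart_le_preimage_horn ≫ φ := by
  let A := tetrahedronPart.{w} m ⊓ oneThreePart m
  let s : (Δ[m + 4] : SSet.{w}) ⟶ Δ[1] := mapOfNat fun i ↦ min (i - 1) 1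
  have hτ' : A.ι ≫ tetrahedronMap m =
      A.ι ≫ s ≫ SSet.stdSimplex.δ 1 ≫ SSet.stdSimplex.δ 0 := by
    simp only [s, tetrahedronMap, stdSimplex_δ_one, stdSimplex_δ_zero, mapOfNat_comp_mapOfNat]
    refine ι_comp_mapOfNat_congr fun S hS ↦ ?_
    rw [le_inf_iff, face_le_tetrahedronPart_iff, face_le_oneThreePart_iff] at hS
    grind
  have hφ : A.ι ≫ s ≫ SSet.stdSimplex.σ 0 ≫ SSet.stdSimplex.δ 0 ≫ initialEdge m =
      Subcomplex.homOfLE inf_le_right ≫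
        restrictMap (oneThreeMap m) oneThreePart_le_preimage_horn := by
    refine (cancel_mono Λ[m + 2, 0].ι).1 ?_
    simp only [s, oneThreeMap, Category.assoc, initialEdge_ι, restrictMap_ι, stdSimplex_σ_zero,
      stdSimplex_δ_zero, mapOfNat_comp_mapOfNat, Subcomplex.homOfLE_ι_assoc]
    refine ι_comp_mapOfNat_congr fun S hS ↦ ?_
    rw [le_inf_iff, face_le_tetrahedronPart_iff, face_le_oneThreePart_iff] at hS
    exact fun i hi ↦ by have := hS.1 i hi; lia
  calc A.ι ≫ tetrahedronMap m ≫ τ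
    _ = A.ι ≫ s ≫ SSet.stdSimplex.δ 1 ≫ SSet.stdSimplex.δ 0 ≫ τ := congrArg (· ≫ τ) hτ'
    _ = A.ι ≫ s ≫ SSet.stdSimplex.σ 0 ≫ SSet.stdSimplex.δ 0 ≫ initialEdge m ≫ φ := by
      rw [hτ.oneThree]
    _ = _ := congrArg (· ≫ φ) hφ

end

lemma restrictMap_zeroTwoMap_eq_restrictMap_oneThreeMap :
    Subcomplex.homOfLE inf_le_left ≫ restrictMap (zeroTwoMap m) zeroTwoPart_le_preimage_horn =
      Subcomplex.homOfLE (inf_le_right : zeroTwoPart.{w} m ⊓ oneThreePart m ≤ _) ≫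
        restrictMap (oneThreeMap m) oneThreePart_le_preimage_horn := by
  refine (cancel_mono Λ[m + 2, 0].ι).1 ?_
  simp only [zeroTwoMap, oneThreeMap, Category.assoc, restrictMap_ι, Subcomplex.homOfLE_ι_assoc]
  refine ι_comp_mapOfNat_congr fun S hS ↦ ?_
  rw [le_inf_iff, face_le_zeroTwoPart_iff, face_le_oneThreePart_iff] at hS
  grind

lemma exists_hom_initialPart {E : SSet.{w}} {φ : (Λ[m + 2, 0] : SSet.{w}) ⟶ E} {τ : Δ[3] ⟶ E}
    (hτ : IsInverseTetrahedron (initialEdge m ≫ φ) τ) :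
    ∃ h : (initialPart.{w} m).toSSet ⟶ E,
      Subcomplex.homOfLE (le_sup_right.trans le_sup_left) ≫ h =
        restrictMap (zeroTwoMap m) zeroTwoPart_le_preimage_horn ≫ φ ∧
      Subcomplex.homOfLE le_sup_right ≫ h =
        restrictMap (oneThreeMap m) oneThreePart_le_preimage_horn ≫ φ := by
  obtain ⟨h, -, h₀₂, h₁₃⟩ := exists_hom_sup_sup (tetrahedronMap_comp_eq_zeroTwoMap_comp hτ)
    (tetrahedronMap_comp_eq_oneThreeMap_comp hτ)
    (congrArg (· ≫ φ) restrictMap_zeroTwoMap_eq_restrictMap_oneThreeMap)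
  exact ⟨h, h₀₂, h₁₃⟩

lemma zeroTwoPart_le_facetsGE : zeroTwoPart.{w} m ≤ facetsGE (m + 4) 3 := inf_le_right

lemma oneThreePart_le_facetsGE : oneThreePart.{w} m ≤ facetsGE (m + 4) 3 :=
  le_sup_right.trans initialPart_le_facetsGE

lemma exists_hom_facetsGE_three {E : SSet.{w}} [Quasicategory E]
    {φ : (Λ[m + 2, 0] : SSet.{w}) ⟶ E} {τ : Δ[3] ⟶ E}
    (hτ : IsInverseTetrahedron (initialEdge m ≫ φ) τ) :
    ∃ h : (facetsGE.{w} (m + 4) 3).toSSet ⟶ E,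
      Subcomplex.homOfLE zeroTwoPart_le_facetsGE ≫ h =
        restrictMap (zeroTwoMap m) zeroTwoPart_le_preimage_horn ≫ φ ∧
      Subcomplex.homOfLE oneThreePart_le_facetsGE ≫ h =
        restrictMap (oneThreeMap m) oneThreePart_le_preimage_horn ≫ φ := by
  obtain ⟨h₁, h₀₂, h₁₃⟩ := exists_hom_initialPart hτ
  obtain ⟨h₂, rfl⟩ := exists_extension_of_innerAnodyneExtensions
    innerAnodyneExtensions_initialPart_le_middlePart h₁
  obtain ⟨h₃, rfl⟩ := exists_extension_of_innerAnodyneExtensions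
    innerAnodyneExtensions_middlePart_le_facetsGE h₂
  exact ⟨h₃, h₀₂, h₁₃⟩

/-- In the join of `Δ[3]` and `Δ[m]`, the join of the edge `13` with `Δ[m]`. -/
def oneThreeFace (m : ℕ) : (Δ[m + 4] : SSet.{w}).Subcomplex :=
  face {i | (i : ℕ) ≠ 0 ∧ (i : ℕ) ≠ 2}

lemma face_le_oneThreeFace_iff {S : Finset (Fin (m + 5))} :
    face.{w} S ≤ oneThreeFace m ↔ ∀ i ∈ S, (i : ℕ) ≠ 0 ∧ (i : ℕ) ≠ 2 := by
  simp [oneThreeFace, face_le_face_iff, Finset.subset_iff]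

/-- The map collapsing the vertices `1`, `2`, `3` to `1`. It provides the constant lift of the
degenerate edge `13`. -/
def oneThreeCollapse (m : ℕ) : (Δ[m + 4] : SSet.{w}) ⟶ Δ[m + 4] :=
  mapOfNat fun i ↦ if i ≤ 3 then min i 1 else i

lemma oneThreeFace_le_preimage_facetsGE :
    oneThreeFace.{w} m ≤ (facetsGE (m + 4) 3).preimage (oneThreeCollapse m) := by
  refine le_preimage_mapOfNat fun _ _ ↦ (face_le_facetsGE_iff (by lia)).2 ⟨⟨3, by lia⟩, ?_⟩
  grind

lemma facetsGE_three_inf_oneThreeFace_le :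
    facetsGE.{w} (m + 4) 3 ⊓ oneThreeFace m ≤ face {i | (i : ℕ) ≠ 3} ⊔ facetsGE (m + 4) 4 := by
  rw [le_iff_forall_face_le]
  intro S hS
  rw [le_inf_iff, face_le_facetsGE_iff (by lia)] at hS
  rw [face_le_sup_iff, face_le_facetsGE_iff (by lia), face_le_face_iff]
  grind

lemma oneThreePart_le_preimage_oneThreePart :
    oneThreePart.{w} m ≤ (oneThreePart m).preimage (oneThreeCollapse m) := by
  refine le_preimage_mapOfNat fun S hS ↦ ?_
  rw [face_le_oneThreePart_iff] at hS ⊢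
  obtain ⟨h, i, hi, hiS⟩ := hS
  exact ⟨by grind, i, by grind⟩

lemma restrictMap_oneThreeCollapse_comp_oneThreeMap :
    restrictMap (oneThreeCollapse m) oneThreePart_le_preimage_oneThreePart ≫
      restrictMap (oneThreeMap m) oneThreePart_le_preimage_horn =
        restrictMap (oneThreeMap.{w} m) oneThreePart_le_preimage_horn := by
  refine (cancel_mono Λ[m + 2, 0].ι).1 ?_
  rw [Category.assoc, restrictMap_ι, restrictMap_ι_assoc, oneThreeCollapse, oneThreeMap,
    mapOfNat_comp_mapOfNat]
  refine ι_comp_mapOfNat_congr fun S hS ↦ ?_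
  have := (face_le_oneThreePart_iff.1 hS).1
  grind

lemma facetsGE_three_comp_eq_oneThreeFace {E : SSet.{w}} {φ : (Λ[m + 2, 0] : SSet.{w}) ⟶ E}
    {h : (facetsGE.{w} (m + 4) 3).toSSet ⟶ E}
    (h₁₃ : Subcomplex.homOfLE oneThreePart_le_facetsGE ≫ h =
      restrictMap (oneThreeMap m) oneThreePart_le_preimage_horn ≫ φ) :
    Subcomplex.homOfLE inf_le_left ≫ h =
      Subcomplex.homOfLE (inf_le_right : facetsGE.{w} (m + 4) 3 ⊓ oneThreeFace m ≤ _) ≫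
        restrictMap (oneThreeCollapse m) oneThreeFace_le_preimage_facetsGE ≫ h := by
  refine hom_ext_of_le_sup facetsGE_three_inf_oneThreeFace_le ?_ ?_
  · refine congrArg (· ≫ h) ((cancel_mono (facetsGE (m + 4) 3).ι).1 ?_ :
      Subcomplex.homOfLE inf_le_left ≫ Subcomplex.homOfLE inf_le_left =
        Subcomplex.homOfLE inf_le_left ≫ Subcomplex.homOfLE inf_le_right ≫
          restrictMap (oneThreeCollapse m) oneThreeFace_le_preimage_facetsGE)
    simp only [oneThreeCollapse, Category.assoc, restrictMap_ι, Subcomplex.homOfLE_ι_assoc,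
      Subcomplex.homOfLE_ι]
    conv_lhs => rw [← Category.comp_id (Subcomplex.ι _), ← mapOfNat_id]
    refine ι_comp_mapOfNat_congr fun S hS ↦ ?_
    rw [le_inf_iff, le_inf_iff, face_le_face_iff, face_le_oneThreeFace_iff] at hS
    grind
  · let D := facetsGE.{w} (m + 4) 3 ⊓ oneThreeFace m ⊓ facetsGE (m + 4) 4
    have hD : D ≤ oneThreePart m := le_inf (inf_le_left.trans inf_le_right) inf_le_right
    let c := restrictMap (oneThreeCollapse.{w} m) oneThreePart_le_preimage_oneThreePart
    let q := restrictMap (oneThreeMap.{w} m) oneThreePart_le_preimage_horn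
    calc Subcomplex.homOfLE hD ≫ Subcomplex.homOfLE oneThreePart_le_facetsGE ≫ h
      _ = Subcomplex.homOfLE hD ≫ q ≫ φ := by rw [h₁₃]
      _ = Subcomplex.homOfLE hD ≫ (c ≫ q) ≫ φ := by
        rw [restrictMap_oneThreeCollapse_comp_oneThreeMap]
      _ = Subcomplex.homOfLE hD ≫ c ≫ Subcomplex.homOfLE oneThreePart_le_facetsGE ≫ h := by
        rw [h₁₃, Category.assoc]

lemma oneThreeFace_le_face_ne_two : oneThreeFace.{w} m ≤ face {i | (i : ℕ) ≠ 2} := by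
  rw [oneThreeFace, face_le_face_iff]
  grind

lemma innerAnodyneExtensions_sup_face_ne_two :
    innerAnodyneExtensions (Subcomplex.homOfLE (sup_le_sup_left oneThreeFace_le_face_ne_two _ :
      facetsGE.{w} (m + 4) 3 ⊔ oneThreeFace m ≤ facetsGE (m + 4) 3 ⊔ face {i | (i : ℕ) ≠ 2})) := by
  refine innerAnodyneExtensions_homOfLE _ ⟨1, by lia⟩ ?_
  simp only [face_le_sup_iff, face_le_facetsGE_iff (Nat.le_add_left 3 (m + 1)),
    face_le_oneThreeFace_iff, face_le_face_iff, Fin.lt_def, Finset.subset_iff,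
    Finset.mem_filter_univ]
  intro S hB hA
  have := not_or.1 hA |>.1
  have : (⟨3, by lia⟩ : Fin (m + 5)) ∈ S := by grind
  grind

/-- The inclusion of the face of `Δ[m + 4]` opposite to the edge `12`. Its initial edge is `03`. -/
def hornInclusion (m : ℕ) : (Δ[m + 2] : SSet.{w}) ⟶ Δ[m + 4] :=
  mapOfNat fun i ↦ if i = 0 then 0 else i + 2

lemma range_hornInclusion_le :
    Subcomplex.range (hornInclusion.{w} m) ≤ face {i | (i : ℕ) ≠ 2} := by
  refine range_mapOfNat_le ?_
  rw [face_le_face_iff]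
  grind

lemma horn_le_preimage_hornInclusion :
    Λ[m + 2, 0] ≤ (zeroTwoPart.{w} m).preimage (hornInclusion m) := by
  refine le_preimage_mapOfNat fun S hS ↦ ?_
  rw [horn_zero_eq_facetsGE, face_le_facetsGE_iff (by lia)] at hS
  obtain ⟨i, hi, hiS⟩ := hS
  exact face_le_zeroTwoPart_iff.2 ⟨by grind, ⟨i + 2, by lia⟩, by grind⟩

lemma hornInclusion_comp_zeroTwoMap : hornInclusion.{w} m ≫ zeroTwoMap m = 𝟙 _ := by
  rw [hornInclusion, zeroTwoMap, mapOfNat_comp_mapOfNat, ← mapOfNat_id]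
  congr 1
  grind

lemma exists_filler_of_isInverseTetrahedron {E : SSet.{w}} [Quasicategory E]
    {φ : (Λ[m + 2, 0] : SSet.{w}) ⟶ E} {τ : Δ[3] ⟶ E}
    (hτ : IsInverseTetrahedron (initialEdge m ≫ φ) τ) :
    ∃ g : Δ[m + 2] ⟶ E, φ = Λ[m + 2, 0].ι ≫ g := by
  obtain ⟨h, h₀₂, h₁₃⟩ := exists_hom_facetsGE_three hτ
  obtain ⟨k, rfl, -⟩ := exists_hom_sup _ _ (facetsGE_three_comp_eq_oneThreeFace h₁₃)
  obtain ⟨l, rfl⟩ := exists_extension_of_innerAnodyneExtensions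
    innerAnodyneExtensions_sup_face_ne_two k
  have hφ : restrictMap (hornInclusion m) horn_le_preimage_hornInclusion ≫
      restrictMap (zeroTwoMap m) zeroTwoPart_le_preimage_horn = 𝟙 (Λ[m + 2, 0] : SSet.{w}) := by
    refine (cancel_mono Λ[m + 2, 0].ι).1 ?_
    rw [Category.assoc, restrictMap_ι, restrictMap_ι_assoc, hornInclusion_comp_zeroTwoMap,
      Category.comp_id, Category.id_comp]
  refine ⟨Subcomplex.lift (hornInclusion m) range_hornInclusion_le ≫
    Subcomplex.homOfLE le_sup_right ≫ l, ?_⟩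
  rw [← Category.id_comp φ, ← hφ, Category.assoc, ← h₀₂]
  rfl

end OuterHorn

section Op

variable {E : SSet.{w}}

lemma exists_filler_of_iso_op {E' : SSet.{w}} (e : E' ≅ E.op) {n : ℕ} {i : Fin (n + 1)}
    (hE' : ∀ ψ : (Λ[n, i.rev] : SSet.{w}) ⟶ E', ∃ g : Δ[n] ⟶ E', ψ = Λ[n, i.rev].ι ≫ g)
    (φ : (Λ[n, i] : SSet.{w}) ⟶ E) : ∃ g : Δ[n] ⟶ E, φ = Λ[n, i].ι ≫ g := by
  let o := SSet.stdSimplex.opIso.{w} ⦋n⦌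
  have h_inv : Λ[n, i.rev] ≤ Λ[n, i].op.preimage o.inv := (op_horn i).ge
  have h_hom : Λ[n, i].op ≤ Subcomplex.preimage Λ[n, i.rev] o.hom := by
    rw [← op_horn i, ← Subcomplex.preimage_comp, o.hom_inv_id]
    rfl
  let φ' : Λ[n, i].op.toSSet ⟶ E.op := opFunctor.map φ
  obtain ⟨g, hg⟩ := hE' (restrictMap o.inv h_inv ≫ φ' ≫ e.inv)
  have hφ : restrictMap o.hom h_hom ≫ restrictMap o.inv h_inv = 𝟙 _ := by
    rw [← cancel_mono Λ[n, i].op.ι, Category.assoc, restrictMap_ι, restrictMap_ι_assoc,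
      o.hom_inv_id, Category.comp_id, Category.id_comp]
  have := opEquivalence.{w}.isEquivalence_functor
  refine ⟨opEquivalence.functor.preimage (o.hom ≫ g ≫ e.hom),
    opEquivalence.functor.map_injective ?_⟩
  rw [Functor.map_comp, Functor.map_preimage]
  calc φ'
    _ = restrictMap o.hom h_hom ≫ (restrictMap o.inv h_inv ≫ φ' ≫ e.inv) ≫ e.hom := by
      simp [reassoc_of% hφ]
    _ = _ := by rw [hg]; rfl

instance quasicategory_op [Quasicategory E] : Quasicategory E.op where
  hornFilling' n i φ h₀ hₙ := by
    have e : E ≅ E.op.op := opEquivalence.unitIso.app E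
    refine exists_filler_of_iso_op e (Quasicategory.hornFilling ?_ ?_) φ
    · rwa [Fin.lt_rev_iff, Fin.rev_zero]
    · rwa [Fin.rev_lt_iff, Fin.rev_last]

/-- The inverse of an edge, reversed. -/
def invStructOp {x y : E.op _⦋0⦌} {e : E.op.Edge x y}
    (I : (Edge.mk (opObjEquiv e.edge) (x₀ := opObjEquiv y) (x₁ := opObjEquiv x)
      (by simp [δ_opObjEquiv]) (by simp [δ_opObjEquiv])).InvStruct) : e.InvStruct where
  inv := Edge.mk (opObjEquiv.symm I.inv.edge) (by simp) (by simp)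
  homInvId := Edge.CompStruct.mk (opObjEquiv.symm I.invHomId.simplex)
  invHomId := Edge.CompStruct.mk (opObjEquiv.symm I.homInvId.simplex)

end Op

section HornFilling

variable {E : SSet.{w}}

lemma δ_yonedaEquiv_eq_of_horn_ι_comp {n : ℕ} {i j : Fin (n + 2)} {hij : j ≠ i}
    {g : Δ[n + 1] ⟶ E} {s : E _⦋n⦌}
    (h : horn.ι i j hij ≫ Λ[n + 1, i].ι ≫ g = yonedaEquiv.symm s) :
    E.δ j (yonedaEquiv g) = s := by
  rw [← stdSimplex.yonedaEquiv_δ_comp, ← horn.ι_ι_assoc (hij := hij), h, Equiv.apply_symm_apply]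

lemma exists_simplex_of_horn₃₁ [Quasicategory E] {t₀ t₂ t₃ : E _⦋2⦌}
    (h₀₂ : E.δ 1 t₀ = E.δ 0 t₂) (h₀₃ : E.δ 2 t₀ = E.δ 0 t₃) (h₂₃ : E.δ 2 t₂ = E.δ 2 t₃) :
    ∃ s : E _⦋3⦌, E.δ 0 s = t₀ ∧ E.δ 2 s = t₂ ∧ E.δ 3 s = t₃ := by
  obtain ⟨φ, hφ₀, hφ₂, hφ₃⟩ := horn₃₁.exists_desc (yonedaEquiv.symm t₀) (yonedaEquiv.symm t₂)
    (yonedaEquiv.symm t₃) (by simp only [stdSimplex.δ_comp_yonedaEquiv_symm, h₀₃])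
    (by simp only [stdSimplex.δ_comp_yonedaEquiv_symm, h₀₂])
    (by simp only [stdSimplex.δ_comp_yonedaEquiv_symm, h₂₃])
  obtain ⟨g, rfl⟩ := Quasicategory.hornFilling (by simp) (by simp [Fin.lt_def]) φ
  exact ⟨yonedaEquiv g, δ_yonedaEquiv_eq_of_horn_ι_comp hφ₀, δ_yonedaEquiv_eq_of_horn_ι_comp hφ₂,
    δ_yonedaEquiv_eq_of_horn_ι_comp hφ₃⟩

lemma exists_simplex_of_horn₃₂ [Quasicategory E] {t₀ t₁ t₃ : E _⦋2⦌}
    (h₀₁ : E.δ 0 t₀ = E.δ 0 t₁) (h₀₃ : E.δ 2 t₀ = E.δ 0 t₃) (h₁₃ : E.δ 2 t₁ = E.δ 1 t₃) :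
    ∃ s : E _⦋3⦌, E.δ 0 s = t₀ ∧ E.δ 1 s = t₁ ∧ E.δ 3 s = t₃ := by
  obtain ⟨φ, hφ₀, hφ₁, hφ₃⟩ := horn₃₂.exists_desc (yonedaEquiv.symm t₀) (yonedaEquiv.symm t₁)
    (yonedaEquiv.symm t₃) (by simp only [stdSimplex.δ_comp_yonedaEquiv_symm, h₁₃])
    (by simp only [stdSimplex.δ_comp_yonedaEquiv_symm, h₀₃])
    (by simp only [stdSimplex.δ_comp_yonedaEquiv_symm, h₀₁])
  obtain ⟨g, rfl⟩ := Quasicategory.hornFilling (by simp) (by simp [Fin.lt_def]) φ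
  exact ⟨yonedaEquiv g, δ_yonedaEquiv_eq_of_horn_ι_comp hφ₀, δ_yonedaEquiv_eq_of_horn_ι_comp hφ₁,
    δ_yonedaEquiv_eq_of_horn_ι_comp hφ₃⟩

lemma exists_isInverseTetrahedron [Quasicategory E] {x y : E _⦋0⦌} {e : E.Edge x y}
    (I : e.InvStruct) : ∃ τ, IsInverseTetrahedron (yonedaEquiv.symm e.edge) τ := by
  obtain ⟨s, h₀, h₁, -⟩ := exists_simplex_of_horn₃₂ (t₀ := I.invHomId.simplex)
    (t₁ := E.σ 0 e.edge) (t₃ := I.homInvId.simplex)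
    (I.invHomId.d₀.trans (E.δ_comp_σ_self_apply (i := 0) _).symm)
    (I.invHomId.d₂.trans I.homInvId.d₀.symm)
    ((Edge.CompStruct.idComp e).d₂.trans I.homInvId.d₁.symm)
  refine ⟨yonedaEquiv.symm s, ?_, ?_⟩
  · rw [stdSimplex.δ_comp_yonedaEquiv_symm, stdSimplex.σ_comp_yonedaEquiv_symm, h₁]
  · simp only [stdSimplex.δ_comp_yonedaEquiv_symm, stdSimplex.σ_comp_yonedaEquiv_symm, h₀,
      Edge.CompStruct.d₁, Edge.id_edge, Edge.tgt_eq]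

lemma exists_filler_horn_zero [Quasicategory E] {m : ℕ} {φ : (Λ[m + 2, 0] : SSet.{w}) ⟶ E}
    (I : (Edge.mk' (yonedaEquiv (initialEdge m ≫ φ))).InvStruct) :
    ∃ g : Δ[m + 2] ⟶ E, φ = Λ[m + 2, 0].ι ≫ g := by
  obtain ⟨τ, hτ⟩ := exists_isInverseTetrahedron I
  rw [Edge.mk'_edge, Equiv.symm_apply_apply] at hτ
  exact exists_filler_of_isInverseTetrahedron hτ

end HornFilling

section EdgesInvertible

variable {E : SSet.{w}}

lemma exists_compStruct [Quasicategory E] {x₀ x₁ x₂ : E _⦋0⦌} (e₀₁ : E.Edge x₀ x₁)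
    (e₁₂ : E.Edge x₁ x₂) : ∃ e₀₂ : E.Edge x₀ x₂, Nonempty (e₀₁.CompStruct e₁₂ e₀₂) := by
  obtain ⟨φ, h₂, h₀⟩ := horn₂₁.isPushout.exists_desc (yonedaEquiv.symm e₀₁.edge)
    (yonedaEquiv.symm e₁₂.edge) (by simp [stdSimplex.δ_comp_yonedaEquiv_symm])
  obtain ⟨g, rfl⟩ := Quasicategory.hornFilling (by simp) (by simp) φ
  let t : E _⦋2⦌ := yonedaEquiv g
  have ht₀ : E.δ 0 t = e₁₂.edge := δ_yonedaEquiv_eq_of_horn_ι_comp h₀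
  have ht₂ : E.δ 2 t = e₀₁.edge := δ_yonedaEquiv_eq_of_horn_ι_comp h₂
  refine ⟨Edge.mk (E.δ 1 t) ?_ ?_, ⟨Edge.CompStruct.mk t ht₂ ht₀⟩⟩
  · exact (E.δ_comp_δ_self_apply (i := 1) t).trans ((congrArg (E.δ 1) ht₂).trans e₀₁.src_eq)
  · exact (E.δ_comp_δ_self_apply (i := 0) t).symm.trans ((congrArg (E.δ 0) ht₀).trans e₁₂.tgt_eq)

instance quasicategory₂_truncation [Quasicategory E] :
    Truncated.Quasicategory₂ ((truncation 2).obj E) where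
  fill21 e₀₁ e₁₂ :=
    have ⟨e₀₂, ⟨h⟩⟩ := exists_compStruct (.ofTruncated e₀₁) (.ofTruncated e₁₂)
    ⟨e₀₂.toTruncated, h.toTruncated⟩
  fill31 f₃ f₀ f₂ := by
    obtain ⟨s, h₀, h₂, h₃⟩ := exists_simplex_of_horn₃₁ (E := E)
      (f₀.d₁.trans f₂.d₀.symm) (f₀.d₂.trans f₃.d₀.symm) (f₂.d₂.trans f₃.d₂.symm)
    refine ⟨⟨E.δ 1 s, ?_, ?_, ?_⟩⟩
    · exact (E.δ_comp_δ_apply (i := 1) (j := 2) (by simp) s).symm.trans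
        ((congrArg (E.δ 1) h₃).trans f₃.d₁)
    · exact (E.δ_comp_δ_self_apply (i := 0) s).symm.trans ((congrArg (E.δ 0) h₀).trans f₀.d₀)
    · exact (E.δ_comp_δ_self_apply (i := 1) s).trans ((congrArg (E.δ 1) h₂).trans f₂.d₁)
  fill32 f₃ f₀ f₁ := by
    obtain ⟨s, h₀, h₁, h₃⟩ := exists_simplex_of_horn₃₂ (E := E)
      (f₀.d₀.trans f₁.d₀.symm) (f₀.d₂.trans f₃.d₀.symm) (f₁.d₂.trans f₃.d₁.symm)
    refine ⟨⟨E.δ 2 s, ?_, ?_, ?_⟩⟩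
    · exact (E.δ_comp_δ_self_apply (i := 2) s).trans ((congrArg (E.δ 2) h₃).trans f₃.d₂)
    · exact (E.δ_comp_δ_apply (i := 0) (j := 1) (by simp) s).trans
        ((congrArg (E.δ 1) h₀).trans f₀.d₁)
    · exact (E.δ_comp_δ_self_apply (i := 1) s).symm.trans ((congrArg (E.δ 1) h₁).trans f₁.d₁)

/-- All edges of `E` are invertible up to homotopy. -/
def EdgesInvertible (E : SSet.{w}) : Prop :=
  ∀ ⦃x y : E _⦋0⦌⦄ (e : E.Edge x y), Nonempty e.InvStruct

lemma EdgesInvertible.op (hE : EdgesInvertible E) : EdgesInvertible E.op :=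
  fun _ _ _ ↦ (hE _).map invStructOp

lemma exists_filler_of_edgesInvertible [Quasicategory E] (hE : EdgesInvertible E) {m : ℕ}
    {i : Fin (m + 3)} (φ : (Λ[m + 2, i] : SSet.{w}) ⟶ E) :
    ∃ g : Δ[m + 2] ⟶ E, φ = Λ[m + 2, i].ι ≫ g := by
  by_cases h₀ : i = 0
  · subst h₀
    exact exists_filler_horn_zero (hE _).some
  by_cases hₙ : i = Fin.last (m + 2)
  · subst hₙ
    refine exists_filler_of_iso_op (Iso.refl E.op) ?_ φ
    rw [Fin.rev_last]
    exact fun ψ ↦ exists_filler_horn_zero (hE.op _).some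
  · exact Quasicategory.hornFilling (Fin.pos_iff_ne_zero.2 h₀) (Fin.lt_last_iff_ne_last.2 hₙ) φ

lemma kanComplex_of_edgesInvertible [Quasicategory E] (hE : EdgesInvertible E) :
    KanComplex E := by
  rw [KanComplex.iff]
  rintro (_ | n) i f hf
  · refine ⟨stdSimplex.σ 0 ≫ f i.rev (by fin_cases i <;> simp), fun j hj ↦ ?_⟩
    obtain rfl : j = i.rev := by grind
    rw [← Category.assoc, stdSimplex.isTerminalObj₀.hom_ext (stdSimplex.δ _ ≫ stdSimplex.σ 0) (𝟙 _),
      Category.id_comp]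
  · obtain ⟨φ, hφ⟩ := hf.exists_desc
    obtain ⟨g, rfl⟩ := exists_filler_of_edgesInvertible hE φ
    exact ⟨g, fun j hj ↦ by rw [← hφ j hj, horn.ι_ι_assoc]⟩

lemma exists_compStruct_id_of_kanComplex [KanComplex E] {x y : E _⦋0⦌} (e : E.Edge x y) :
    ∃ f : E.Edge y x, Nonempty (e.CompStruct f (.id x)) := by
  obtain ⟨φ, h₂, h₁⟩ := horn₂₀.isPushout.exists_desc (yonedaEquiv.symm e.edge)
    (yonedaEquiv.symm (Edge.id x).edge)
    (by rw [stdSimplex.δ_comp_yonedaEquiv_symm, stdSimplex.δ_comp_yonedaEquiv_symm,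
      e.src_eq, Edge.src_eq])
  obtain ⟨g, rfl⟩ := KanComplex.hornFilling φ
  let t : E _⦋2⦌ := yonedaEquiv g
  have ht₁ : E.δ 1 t = (Edge.id x).edge := δ_yonedaEquiv_eq_of_horn_ι_comp h₁
  have ht₂ : E.δ 2 t = e.edge := δ_yonedaEquiv_eq_of_horn_ι_comp h₂
  refine ⟨Edge.mk (E.δ 0 t) ?_ ?_, ⟨Edge.CompStruct.mk t ht₂ rfl ht₁⟩⟩
  · exact (E.δ_comp_δ_apply (i := 0) (j := 1) (by simp) t).symm.trans
      ((congrArg (E.δ 0) ht₂).trans e.tgt_eq)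
  · exact (E.δ_comp_δ_self_apply (i := 0) t).trans ((congrArg (E.δ 0) ht₁).trans (Edge.tgt_eq _))

lemma exists_id_compStruct_of_kanComplex [KanComplex E] {x y : E _⦋0⦌} (e : E.Edge x y) :
    ∃ f : E.Edge y x, Nonempty (f.CompStruct e (.id y)) := by
  obtain ⟨φ, h₁, h₀⟩ := horn₂₂.isPushout.exists_desc (yonedaEquiv.symm (Edge.id y).edge)
    (yonedaEquiv.symm e.edge)
    (by rw [stdSimplex.δ_comp_yonedaEquiv_symm, stdSimplex.δ_comp_yonedaEquiv_symm,
      e.tgt_eq, Edge.tgt_eq])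
  obtain ⟨g, rfl⟩ := KanComplex.hornFilling φ
  let t : E _⦋2⦌ := yonedaEquiv g
  have ht₀ : E.δ 0 t = e.edge := δ_yonedaEquiv_eq_of_horn_ι_comp h₀
  have ht₁ : E.δ 1 t = (Edge.id y).edge := δ_yonedaEquiv_eq_of_horn_ι_comp h₁
  refine ⟨Edge.mk (E.δ 2 t) ?_ ?_, ⟨Edge.CompStruct.mk t rfl ht₀ ht₁⟩⟩
  · exact (E.δ_comp_δ_self_apply (i := 1) t).symm.trans
      ((congrArg (E.δ 1) ht₁).trans (Edge.src_eq _))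
  · exact (E.δ_comp_δ_apply (i := 0) (j := 1) (by simp) t).trans
      ((congrArg (E.δ 1) ht₀).trans e.src_eq)

lemma nonempty_invStruct_iff [Quasicategory E] {x y : E _⦋0⦌} (e : E.Edge x y) :
    Nonempty e.InvStruct ↔ IsIso (Truncated.HomotopyCategory₂.homMk e.toTruncated) := by
  constructor
  · rintro ⟨I⟩
    exact ⟨Truncated.HomotopyCategory₂.homMk I.inv.toTruncated,
      I.homInvId.toTruncated.homotopyCategory₂_fac, I.invHomId.toTruncated.homotopyCategory₂_fac⟩
  · rintro ⟨g, hg, hg'⟩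
    obtain ⟨f, rfl⟩ := Truncated.HomotopyCategory₂.homMk_surjective g
    exact ⟨⟨.ofTruncated f, .ofTruncated (.ofHomotopyCategory₂Fac hg),
      .ofTruncated (.ofHomotopyCategory₂Fac hg')⟩⟩

lemma edgesInvertible_of_kanComplex [KanComplex E] : EdgesInvertible E := by
  intro x y e
  rw [nonempty_invStruct_iff]
  obtain ⟨f, ⟨hf⟩⟩ := exists_compStruct_id_of_kanComplex e
  obtain ⟨g, ⟨hg⟩⟩ := exists_id_compStruct_of_kanComplex e
  have : IsSplitMono (Truncated.HomotopyCategory₂.homMk e.toTruncated) :=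
    ⟨⟨_, hf.toTruncated.homotopyCategory₂_fac⟩⟩
  have : IsSplitEpi (Truncated.HomotopyCategory₂.homMk e.toTruncated) :=
    ⟨⟨_, hg.toTruncated.homotopyCategory₂_fac⟩⟩
  exact isIso_of_mono_of_isSplitEpi _

theorem kanComplex_iff_edgesInvertible [Quasicategory E] :
    KanComplex E ↔ EdgesInvertible E :=
  ⟨fun _ ↦ edgesInvertible_of_kanComplex, kanComplex_of_edgesInvertible⟩

end EdgesInvertible

section WideSubcategory

variable {C : Type u} [Category.{v} C] {W : MorphismProperty C} {X : SSet.{max u v}}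
  {η : X ⟶ nerve C}

lemma prop_map_app_of_prop_hom (hη : ∀ e : X _⦋1⦌, W (ComposableArrows.hom (η.app _ e)))
    {n : SimplexCategoryᵒᵖ} (x : X.obj n) ⦃i j : Fin (n.unop.len + 1)⦄ (f : i ⟶ j) :
    W (CategoryTheory.Functor.map (η.app n x : ComposableArrows C n.unop.len) f) := by
  let a := (SimplexCategory.mkOfLe i j (leOfHom f)).op
  have h (s : ComposableArrows C 1) (hs : W s.hom) (h : s = (nerve C).map a (η.app n x)) :
      W (CategoryTheory.Functor.map (η.app n x : ComposableArrows C n.unop.len) f) := by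
    subst h
    exact hs
  exact h _ (hη (X.map a x)) (η.naturality_apply a x)

variable [W.IsMultiplicative]

/-- The corestriction of a functor to the wide subcategory of the morphisms in `W`. -/
def wideSubcategoryLift {J : Type u'} [Category.{v'} J] (F : J ⥤ C)
    (hF : ∀ ⦃i j : J⦄ (f : i ⟶ j), W (F.map f)) : J ⥤ WideSubcategory W where
  obj j := ⟨F.obj j⟩
  map f := ⟨F.map f, hF f⟩

lemma wideSubcategoryLift_congr {J : Type u'} [Category.{v'} J] {F G : J ⥤ C} (h : F = G)
    (hF : ∀ ⦃i j : J⦄ (f : i ⟶ j), W (F.map f)) (hG : ∀ ⦃i j : J⦄ (f : i ⟶ j), W (G.map f)) :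
    wideSubcategoryLift F hF = wideSubcategoryLift G hG := by
  subst h
  rfl

/-- The corestriction of a morphism to a nerve, to the nerve of the wide subcategory of the
morphisms in `W`, when all edges are sent to `W`. -/
def nerveWideSubcategoryLift (η : X ⟶ nerve C)
    (hη : ∀ e : X _⦋1⦌, W (ComposableArrows.hom (η.app _ e))) :
    X ⟶ nerve (WideSubcategory W) where
  app n := ↾fun x ↦ wideSubcategoryLift (η.app n x) (prop_map_app_of_prop_hom hη x)
  naturality n m f := by
    ext x
    exact wideSubcategoryLift_congr (W := W) (η.naturality_apply f x) _ _

end WideSubcategory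

section Adjunction

variable {ho : SSet.{max u v} ⥤ Cat.{v, u}} {X : SSet.{max u v}}

lemma eq_top_of_prop_unit_app (adj : ho ⊣ nerveFunctor.{v, u})
    {W : MorphismProperty (ho.obj X)} [W.IsMultiplicative]
    (hW : ∀ e : X _⦋1⦌, W (ComposableArrows.hom ((adj.unit.app X).app _ e))) : W = ⊤ := by
  let ι : Cat.of (WideSubcategory W) ⟶ ho.obj X := (wideSubcategoryInclusion W).toCatHom
  obtain ⟨G, hG⟩ := (adj.homEquiv X (Cat.of (WideSubcategory W))).surjective
    (nerveWideSubcategoryLift (adj.unit.app X) hW)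
  have hGι : G ≫ ι = 𝟙 (ho.obj X) := by
    apply (adj.homEquiv _ _).injective
    rw [Adjunction.homEquiv_naturality_right, hG, Adjunction.homEquiv_id]
    rfl
  have prop_of_eq_id (F : ho.obj X ⟶ ho.obj X) (hF : F = 𝟙 _) {x y : ho.obj X} (f : x ⟶ y)
      (hf : W (F.toFunctor.map f)) : W f := by
    subst hF
    exact hf
  exact top_unique fun x y f _ ↦ prop_of_eq_id _ hGι f (G.toFunctor.map f).property

lemma isIso_of_isIso_unit_app (adj : ho ⊣ nerveFunctor.{v, u})
    (h : ∀ e : X _⦋1⦌, IsIso (ComposableArrows.hom ((adj.unit.app X).app _ e)))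
    {x y : ho.obj X} (f : x ⟶ y) : IsIso f :=
  (eq_top_of_prop_unit_app adj (W := .isomorphisms _) h).ge f trivial

/-- The postcomposition of the simplices of a nerve with a functor. It differs from
composition with `nerveMap K` in that the universes of `C` and `D` may be different. -/
def compNerve {C : Type (max u v)} [SmallCategory C] {D : Type u} [Category.{v} D]
    (η : X ⟶ nerve C) (K : C ⥤ D) : X ⟶ nerve D where
  app n := ↾fun x ↦ show ComposableArrows D n.unop.len from η.app n x ⋙ K
  naturality n m f := by
    ext x
    exact congrArg (fun y : ComposableArrows C m.unop.len ↦ y ⋙ K) (η.naturality_apply f x)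

lemma exists_functor_unit_app_comp_eq (adj : ho ⊣ nerveFunctor.{v, u})
    {C : Type (max u v)} [SmallCategory C] {D : Type u} [Category.{v} D] (η : X ⟶ nerve C)
    (K : C ⥤ D) :
    ∃ F : ho.obj X ⥤ D, ∀ (n : ℕ) (x : X _⦋n⦌),
      ((adj.unit.app X).app _ x : ComposableArrows (ho.obj X) n) ⋙ F =
        (η.app _ x : ComposableArrows C n) ⋙ K := by
  obtain ⟨F, hF⟩ := (adj.homEquiv X (Cat.of D)).surjective (compNerve η K)
  refine ⟨F.toFunctor, fun n x ↦ ?_⟩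
  rw [adj.homEquiv_unit] at hF
  exact congrArg (fun φ : X ⟶ nerve D ↦ φ.app _ x) hF

lemma small_objects_of_nerve_adjunction (adj : ho ⊣ nerveFunctor.{v, u})
    (S : Type (max u v)) : Small.{u} S := by
  let η : nerve (Discrete S) ⟶ nerve (Discrete S) := 𝟙 _
  let vertex (s : S) : nerve (Discrete S) _⦋0⦌ := nerveEquiv.symm (Discrete.mk s)
  let γ (s : S) := nerveEquiv ((adj.unit.app (nerve (Discrete S))).app (op ⦋0⦌) (vertex s))
  -- A functor which separates one element of `S` from the others factors through `ho`.
  refine small_of_injective (f := γ) fun s s' hs ↦ ?_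
  let _ : Category.{0} (ULift.{u} (Discrete Prop)) := uliftCategory _
  let χ : Discrete S ⥤ ULiftHom.{v} (ULift.{u} (Discrete Prop)) :=
    Discrete.functor (fun t ↦ Discrete.mk (t = s')) ⋙ ULift.upFunctor ⋙ ULiftHom.up
  obtain ⟨F, hF⟩ := exists_functor_unit_app_comp_eq adj η χ
  have hFγ (t : S) : F.obj (γ t) = χ.obj (Discrete.mk t) := congrArg nerveEquiv (hF 0 (vertex t))
  have hχ : χ.obj (Discrete.mk s) = χ.obj (Discrete.mk s') :=
    (hFγ s).symm.trans ((congrArg F.obj hs).trans (hFγ s'))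
  have : (s = s') = (s' = s') := congrArg (fun b ↦ (ULiftHom.objDown b).down.as) hχ
  simpa using this

lemma small_morphisms_of_nerve_adjunction (adj : ho ⊣ nerveFunctor.{v, u})
    (S : Type (max u v)) : Small.{v} S := by
  let C := WalkingParallelFamily S
  let η : nerve C ⟶ nerve C := 𝟙 _
  let line (s : S) : (.zero : C) ⟶ .one := .line s
  let γ (s : S) := nerve.homEquiv ((nerve.edgeMk (line s)).map (adj.unit.app (nerve C)))
  refine small_of_injective (f := γ) fun s s' hs ↦ ?_
  let _ : Category.{0} (ULift.{u} (SingleObj (Function.End Prop))) := uliftCategory _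
  let D := ULiftHom.{v} (ULift.{u} (SingleObj (Function.End Prop)))
  let χ : C ⥤ D :=
    parallelFamily (C := SingleObj (Function.End Prop)) (X := SingleObj.star _)
      (Y := SingleObj.star _) (fun t _ ↦ t = s') ⋙ ULift.upFunctor ⋙ ULiftHom.up
  obtain ⟨F, hF⟩ := exists_functor_unit_app_comp_eq adj η χ
  let predicate (a : ComposableArrows D 1) : Function.End Prop := ULift.down a.hom
  have hpredicate (t : S) :
      predicate (((adj.unit.app (nerve C)).app _ (nerve.edgeMk (line t)).edge :
        ComposableArrows _ 1) ⋙ F) = fun _ ↦ t = s' :=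
    congrArg predicate (hF 1 (nerve.edgeMk (line t)).edge)
  have hedge := congrArg Edge.edge (nerve.homEquiv.injective hs)
  have := (hpredicate s).symm.trans
    ((congrArg (fun a : ComposableArrows _ 1 ↦ predicate (a ⋙ F)) hedge).trans (hpredicate s'))
  simpa using congrFun this True

end Adjunction

section Groupoid

lemma isIso_homEquiv_iff {C : Type u} [Category.{v} C] {x y : ComposableArrows C 0}
    (e : (nerve C).Edge x y) :
    IsIso (nerve.homEquiv e) ↔ IsIso e.edge.hom := by
  simp [nerve.homEquiv_apply]

lemma isIso_hom_app_of_invStruct {C : Type u} [Category.{v} C] {X : SSet.{max u v}}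
    (η : X ⟶ nerve C) {x y : X _⦋0⦌} {e : X.Edge x y} (I : e.InvStruct) :
    IsIso (ComposableArrows.hom (η.app _ e.edge)) := by
  have hom_inv := (nerve.homEquiv_comp (I.homInvId.map η)).trans
    ((congrArg _ (Edge.map_id x η)).trans (nerve.homEquiv_id _))
  have inv_hom := (nerve.homEquiv_comp (I.invHomId.map η)).trans
    ((congrArg _ (Edge.map_id y η)).trans (nerve.homEquiv_id _))
  exact (isIso_homEquiv_iff (e.map η)).1 ⟨_, hom_inv, inv_hom⟩

/-- The comparison of the two models of the homotopy category of a `2`-truncated quasicategory: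
paths of edges modulo the relations given by `2`-simplices, and homotopy classes of edges. -/
noncomputable def toHomotopyCategory₂ (X : Truncated.{w} 2) [Truncated.Quasicategory₂ X] :
    X.HomotopyCategory ⥤ X.HomotopyCategory₂ :=
  Truncated.HomotopyCategory.lift Truncated.HomotopyCategory₂.mk
    (fun e ↦ Truncated.HomotopyCategory₂.homMk e)
    (fun x ↦ Truncated.HomotopyCategory₂.homMk_id ⟨x⟩) (fun h ↦ h.homotopyCategory₂_fac)

lemma isIso_homotopyCategory₂_homMk {X : Truncated.{w} 2} [Truncated.Quasicategory₂ X]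
    {x y : X.obj (op ⟨⦋0⦌, by simp⟩)} (e : Truncated.Edge x y)
    (h : IsIso (Truncated.HomotopyCategory.homMk e)) :
    IsIso (Truncated.HomotopyCategory₂.homMk e) := by
  have map_homMk : (toHomotopyCategory₂ X).map (Truncated.HomotopyCategory.homMk e) =
      Truncated.HomotopyCategory₂.homMk e := Truncated.HomotopyCategory.lift_map_homMk _ _ _ _ e
  rw [← map_homMk]
  exact (toHomotopyCategory₂ X).map_isIso _

variable {ho : SSet.{max u v} ⥤ Cat.{v, u}} {X : SSet.{max u v}}

lemma isIso_of_edgesInvertible (adj : ho ⊣ nerveFunctor.{v, u}) (hX : EdgesInvertible X)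
    {x y : ho.obj X} (f : x ⟶ y) : IsIso f :=
  isIso_of_isIso_unit_app adj
    (fun e ↦ isIso_hom_app_of_invStruct _ (hX (.mk' e)).some) f

lemma isIso_hom_app_of_forall_isIso (adj : ho ⊣ nerveFunctor.{v, u})
    (h : ∀ (x y : ho.obj X) (f : x ⟶ y), IsIso f)
    {C : Type (max u v)} [SmallCategory C] (η : X ⟶ nerve C) (e : X _⦋1⦌) :
    IsIso (ComposableArrows.hom (η.app _ e)) := by
  have : LocallySmall.{v} C := ⟨fun _ _ ↦ small_morphisms_of_nerve_adjunction adj _⟩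
  have : Small.{u} (ShrinkHoms C) := small_objects_of_nerve_adjunction adj C
  let K := ((ShrinkHoms.equivalence C).trans (Shrink.equivalence.{u} (ShrinkHoms C))).functor
  obtain ⟨F, hF⟩ := exists_functor_unit_app_comp_eq adj η K
  let a : ComposableArrows (ho.obj X) 1 := (adj.unit.app X).app _ e
  let b : ComposableArrows C 1 := η.app _ e
  have : IsIso a.hom := h _ _ _
  have isIso_hom_of_eq {s t : ComposableArrows (Shrink.{u} (ShrinkHoms C)) 1} (hst : s = t)
      (hs : IsIso s.hom) : IsIso t.hom := hst ▸ hs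
  have : IsIso (K.map b.hom) := isIso_hom_of_eq (hF 1 e) (inferInstanceAs (IsIso (F.map a.hom)))
  exact isIso_of_reflects_iso b.hom K

lemma edgesInvertible_of_forall_isIso (adj : ho ⊣ nerveFunctor.{v, u}) [Quasicategory X]
    (h : ∀ (x y : ho.obj X) (f : x ⟶ y), IsIso f) : EdgesInvertible X := by
  intro x y e
  rw [nonempty_invStruct_iff]
  exact isIso_homotopyCategory₂_homMk _ (isIso_of_isIso_unit_app nerveAdjunction.{max u v}
    (isIso_hom_app_of_forall_isIso adj h (nerveAdjunction.{max u v}.unit.app X)) _)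

lemma edgesInvertible_iff_forall_isIso (adj : ho ⊣ nerveFunctor.{v, u}) [Quasicategory X] :
    EdgesInvertible X ↔ ∀ (x y : ho.obj X) (f : x ⟶ y), IsIso f :=
  ⟨fun hX _ _ ↦ isIso_of_edgesInvertible adj hX, edgesInvertible_of_forall_isIso adj⟩

end Groupoid

/-- A quasicategory `E` is a Kan complex if and only if its homotopy category (its
image under the homotopy category functor `ho`, the left adjoint of the nerve) is a
groupoid, i.e. every morphism in the homotopy category of `E` is an isomorphism. -/
theorem quasicategory_kan_iff_homotopy_category_groupoid
    (ho : SSet ⥤ Cat) (adj : ho ⊣ nerveFunctor)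
    (E : SSet) [SSet.Quasicategory E] :
    SSet.KanComplex E ↔ ∀ (x y : ho.obj E) (f : x ⟶ y), IsIso f := by
  rw [kanComplex_iff_edgesInvertible, edgesInvertible_iff_forall_isIso adj]
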